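/- Let A be a Nakayama algebra over a field k, i.e. A = kQ/I where Q is either an oriented cycle or a linearly oriented quiver of type 𝔸. Then Fac DA, the full subcategory of mod A of quotients of finite direct sums of copies of the k-dual DA = Hom_k(A,k), is closed under extensions: if 0 → X → E → Y → 0 is a short exact sequence in mod A with X, Y ∈ Fac DA, then E ∈ Fac DA. -/

import Mathlib

/-!
`A` is a Nakayama algebra over a field `k` (every finite-dimensional indecomposable
projective or injective `A`-module is uniserial).  Then `Fac DA`, the class of quotients
of finite direct sums of copies of the `k`-dual `DA = Hom_k(A, k)`, is closed under
extensions.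
-/

universe u

/-- The `k`-dual `DA = Hom_k(A, k)` of the algebra `A`. -/
abbrev kDual (k A : Type u) [CommSemiring k] [Ring A] [Algebra k A] : Type u :=
  A →ₗ[k] k

/-- The left `A`-module structure on `DA`: `(a • f) b = f (b * a)`. -/
instance (k A : Type u) [Field k] [Ring A] [Algebra k A] : SMul A (kDual k A) :=
  ⟨fun a f =>
    { toFun := fun b => f (b * a)
      map_add' := fun x y => by simp [add_mul]
      map_smul' := fun c x => by simp [smul_mul_assoc] }⟩

@[simp] lemma kDual.smul_apply {k A : Type u} [Field k] [Ring A] [Algebra k A]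
    (a : A) (f : kDual k A) (b : A) : (a • f) b = f (b * a) := rfl

instance (k A : Type u) [Field k] [Ring A] [Algebra k A] : Module A (kDual k A) where
  one_smul f := by ext b; simp
  mul_smul a a' f := by ext b; simp [mul_assoc]
  smul_zero a := by ext b; simp
  smul_add a f g := by ext b; simp
  add_smul a a' f := by ext b; simp [mul_add]
  zero_smul f := by ext b; simp

/-- `Fac DA`: modules admitting a surjection from `(DA)^n` for some `n > 0`. -/
def FacDual (k A : Type u) [Field k] [Ring A] [Algebra k A]
    (N : Type u) [AddCommGroup N] [Module A N] : Prop :=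
  ∃ n : ℕ, 0 < n ∧ ∃ p : (Fin n → kDual k A) →ₗ[A] N, Function.Surjective p

/-- A module is uniserial if its submodule lattice is totally ordered. -/
def IsUniserialModule (A M : Type u) [Ring A] [AddCommGroup M] [Module A M] : Prop :=
  ∀ S S' : Submodule A M, S ≤ S' ∨ S' ≤ S

/-- A module is indecomposable if it is nonzero and admits no nontrivial direct sum
decomposition. -/
def IsIndecomposableModule (A M : Type u) [Ring A] [AddCommGroup M] [Module A M] : Prop :=
  Nontrivial M ∧ ∀ S S' : Submodule A M, IsCompl S S' → S = ⊥ ∨ S' = ⊥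

/-!
Let `Q` be a finitely generated injective cogenerator over an Artinian ring, such as `DA`, and write
`tr N` for the trace of `Q` in `N`, the sum of the images of all maps `Q → N`.  The theorem amounts
to `tr` being a radical: every map `φ : Q → E / tr E` vanishes.  If not, `φ` is nonzero on an
indecomposable summand `I` of `Q`; let `π : P → I` be a surjection from an
indecomposable projective and lift the resulting map `P → E / tr E` to `h : P → E`.  As `P` is
uniserial, `ker π` and `ker h` are comparable.  If `ker π ≤ ker h`, then `h` factors through `I`.
Otherwise the image of `h` is a uniserial module mapping onto the injective module `I`, and it turns
out to be injective itself: it embeds into an indecomposable summand `J` of `Q`, the map to `I`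
extends to `J`, and since `J` is uniserial this forces the embedding to be onto.  In both cases `h`
has image in `tr E`, a contradiction.
-/

universe v w w'

namespace IsUniserialModule

variable {A : Type u} [Ring A] {M : Type u} [AddCommGroup M] [Module A M]
  {L : Type v} [AddCommGroup L] [Module A L]

lemma eq_top_or_eq_top_of_codisjoint (hM : IsUniserialModule A M) {S T : Submodule A M}
    (hST : Codisjoint S T) : S = ⊤ ∨ T = ⊤ :=
  (hM S T).symm.imp hST.eq_top_of_le hST.eq_top_of_ge

lemma eq_bot_or_eq_bot_of_disjoint (hM : IsUniserialModule A M) {S T : Submodule A M}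
    (hST : Disjoint S T) : S = ⊥ ∨ T = ⊥ :=
  (hM S T).imp hST.eq_bot_of_le hST.eq_bot_of_ge

lemma of_surjective {N : Type u} [AddCommGroup N] [Module A N] (hM : IsUniserialModule A M)
    {f : M →ₗ[A] N} (hf : Function.Surjective f) : IsUniserialModule A N := fun S T =>
  (hM (S.comap f) (T.comap f)).imp (Submodule.comap_le_comap_iff_of_surjective hf).1
    (Submodule.comap_le_comap_iff_of_surjective hf).1

lemma surjective_or_surjective_of_add (hM : IsUniserialModule A M) {f g : L →ₗ[A] M}
    (hfg : Function.Surjective (f + g)) : Function.Surjective f ∨ Function.Surjective g := by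
  simp only [← LinearMap.range_eq_top] at hfg ⊢
  exact hM.eq_top_or_eq_top_of_codisjoint <|
    codisjoint_iff_le_sup.2 <| hfg.ge.trans <| LinearMap.range_add_le f g

lemma injective_or_injective_of_add (hM : IsUniserialModule A M) {f g : M →ₗ[A] L}
    (hfg : Function.Injective (f + g)) : Function.Injective f ∨ Function.Injective g := by
  simp only [← LinearMap.ker_eq_bot] at hfg ⊢
  refine hM.eq_bot_or_eq_bot_of_disjoint (disjoint_iff_inf_le.2 (hfg ▸ ?_))
  rintro x ⟨hf : f x = 0, hg : g x = 0⟩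
  simp [hf, hg]

lemma surjective_of_surjective_comp {N : Type w} [AddCommGroup N] [Module A N] [Nontrivial L]
    (hM : IsUniserialModule A M) {j : N →ₗ[A] M} {ψ : M →ₗ[A] L}
    (hψj : Function.Surjective (ψ ∘ₗ j)) :
    Function.Surjective j := by
  have hsup : LinearMap.range j ⊔ LinearMap.ker ψ = ⊤ := by
    rw [← Submodule.comap_map_eq, ← LinearMap.range_comp, LinearMap.range_eq_top.2 hψj,
      Submodule.comap_top]
  refine LinearMap.range_eq_top.1 <|
    (hM.eq_top_or_eq_top_of_codisjoint (codisjoint_iff.2 hsup)).resolve_right fun hker => ?_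
  obtain ⟨y, hy⟩ := exists_ne (0 : L)
  obtain ⟨x, rfl⟩ := hψj y
  exact hy (LinearMap.congr_fun (LinearMap.ker_eq_top.1 hker) (j x))

end IsUniserialModule

section Summand

lemma injective_of_split {A : Type u} [Ring A] {M N : Type v} [AddCommGroup M] [Module A M]
    [AddCommGroup N] [Module A N] [Module.Injective A M] (i : N →ₗ[A] M) (s : M →ₗ[A] N)
    (hsi : s ∘ₗ i = LinearMap.id) : Module.Injective A N := by
  refine ⟨fun X Y _ _ _ _ f hf g => ?_⟩
  obtain ⟨h, hh⟩ := Module.Injective.out f hf (i ∘ₗ g)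
  exact ⟨s ∘ₗ h, fun x => by simpa [hh] using LinearMap.congr_fun hsi (g x)⟩

section Idempotent

variable {A : Type u} [Ring A] {M : Type v} [AddCommGroup M] [Module A M]

lemma rangeRestrict_comp_subtype_of_isIdempotentElem {e : Module.End A M}
    (he : IsIdempotentElem e) :
    e.rangeRestrict ∘ₗ (LinearMap.range e).subtype = LinearMap.id :=
  LinearMap.ext fun x => Subtype.ext ((LinearMap.IsIdempotentElem.mem_range_iff he).1 x.2)

lemma isIdempotentElem_subtype_comp_rangeRestrict {e : Module.End A M} (he : IsIdempotentElem e)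
    {f : Module.End A (LinearMap.range e)} (hf : IsIdempotentElem f) :
    IsIdempotentElem
      ((LinearMap.range e).subtype ∘ₗ f ∘ₗ e.rangeRestrict : Module.End A M) := by
  have hre (y : LinearMap.range e) : e.rangeRestrict y = y :=
    LinearMap.congr_fun (rangeRestrict_comp_subtype_of_isIdempotentElem he) y
  ext x
  simpa [hre] using LinearMap.congr_fun hf (e.rangeRestrict x)

lemma exists_isIdempotentElem_add_of_isCompl {e : Module.End A M} (he : IsIdempotentElem e)
    {U V : Submodule A (LinearMap.range e)} (hUV : IsCompl U V) :
    ∃ c d : Module.End A M, IsIdempotentElem c ∧ IsIdempotentElem d ∧ c + d = e ∧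
      LinearMap.range c = U.map (LinearMap.range e).subtype ∧
      LinearMap.range d = V.map (LinearMap.range e).subtype := by
  have hrange {U V : Submodule A (LinearMap.range e)} (hUV : IsCompl U V) :
      LinearMap.range ((LinearMap.range e).subtype ∘ₗ U.projection V hUV ∘ₗ e.rangeRestrict) =
        U.map (LinearMap.range e).subtype := by
    rw [LinearMap.range_comp, LinearMap.range_comp_of_range_eq_top _ e.range_rangeRestrict,
      Submodule.range_projection]
  refine ⟨_, _,
    isIdempotentElem_subtype_comp_rangeRestrict he (Submodule.isIdempotentElem_projection hUV),
    isIdempotentElem_subtype_comp_rangeRestrict he (Submodule.isIdempotentElem_projection hUV.symm),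
    ?_, hrange hUV, hrange hUV.symm⟩
  rw [← LinearMap.comp_add, ← LinearMap.add_comp, Submodule.projection_add_projection_eq_id]
  rfl

end Idempotent

variable {A : Type u} [Ring A] {M : Type u} [AddCommGroup M] [Module A M]

theorem exists_isIdempotentElem_isIndecomposableModule_range [IsArtinian A M]
    {p : Module.End A M → Prop} (h_one : p 1) (h_zero : ¬ p 0)
    (h_add : ∀ c d, p (c + d) → p c ∨ p d) :
    ∃ e, IsIdempotentElem e ∧ IsIndecomposableModule A (LinearMap.range e) ∧ p e := by
  -- Among the idempotents satisfying `p`, take one of minimal range.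
  obtain ⟨e, ⟨he, hpe⟩, hmin⟩ := exists_minimalFor_of_wellFoundedLT
    (fun e : Module.End A M => IsIdempotentElem e ∧ p e) (fun e => LinearMap.range e)
    ⟨1, .one, h_one⟩
  have eq_top {c : Module.End A M} {U : Submodule A (LinearMap.range e)} (hc : IsIdempotentElem c)
      (hU : LinearMap.range c = U.map (LinearMap.range e).subtype) (hpc : p c) : U = ⊤ := by
    refine top_le_iff.1 ((Submodule.map_le_map_iff_of_injective
      (LinearMap.range e).subtype_injective _ _).1 ?_)
    rw [Submodule.map_subtype_top, ← hU]
    exact hmin ⟨hc, hpc⟩ (hU.trans_le (Submodule.map_subtype_le _ _))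
  refine ⟨e, he, ⟨?_, fun U V hUV => ?_⟩, hpe⟩
  · rw [Submodule.nontrivial_iff_ne_bot, Ne, LinearMap.range_eq_bot]
    exact fun h => h_zero (h ▸ hpe)
  · obtain ⟨c, d, hc, hd, rfl, hU, hV⟩ := exists_isIdempotentElem_add_of_isCompl he hUV
    refine (h_add c d hpe).symm.imp (fun hpd => ?_) fun hpc => ?_
    · exact disjoint_top.1 (eq_top hd hV hpd ▸ hUV.disjoint)
    · exact top_disjoint.1 (eq_top hc hU hpc ▸ hUV.disjoint)

lemma IsUniserialModule.exists_projective_surjective [IsArtinianRing A] [Module.Finite A M]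
    [Nontrivial M] (hM : IsUniserialModule A M) :
    ∃ (P : Type u) (_ : AddCommGroup P) (_ : Module A P) (π : P →ₗ[A] M),
      Module.Finite A P ∧ Module.Projective A P ∧ IsIndecomposableModule A P ∧
        Function.Surjective π := by
  obtain ⟨n, q, hq⟩ := Module.Finite.exists_fin' A M
  obtain ⟨e, he, hind, hqe⟩ := exists_isIdempotentElem_isIndecomposableModule_range
    (p := fun e : Module.End A (Fin n → A) => Function.Surjective (q ∘ₗ e)) hq
    (fun h => by
      obtain ⟨y, hy⟩ := exists_ne (0 : M)
      obtain ⟨x, hx⟩ := h y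
      exact hy (by simpa using hx.symm))
    (fun c d h => hM.surjective_or_surjective_of_add (by rwa [← LinearMap.comp_add]))
  exact ⟨LinearMap.range e, inferInstance, inferInstance, q ∘ₗ (LinearMap.range e).subtype,
    inferInstance, .of_split _ _ (rangeRestrict_comp_subtype_of_isIdempotentElem he), hind,
    Function.Surjective.of_comp (g := e.rangeRestrict) hqe⟩

end Summand

section Trace

variable (A : Type u) [Ring A] (Q : Type v) [AddCommGroup Q] [Module A Q]
  {N L : Type*} [AddCommGroup N] [Module A N] [AddCommGroup L] [Module A L]

/-- The trace of `Q` in `N`: the submodule generated by the images of all maps `Q → N`. -/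
def traceSubmodule (N : Type*) [AddCommGroup N] [Module A N] : Submodule A N :=
  ⨆ φ : Q →ₗ[A] N, LinearMap.range φ

/-- `Fac Q`: the modules that are quotients of `Q ^ n` for some `n > 0`. -/
def Fac (N : Type*) [AddCommGroup N] [Module A N] : Prop :=
  ∃ n : ℕ, 0 < n ∧ ∃ p : (Fin n → Q) →ₗ[A] N, Function.Surjective p

variable {A Q}

lemma range_le_traceSubmodule (φ : Q →ₗ[A] N) : LinearMap.range φ ≤ traceSubmodule A Q N :=
  le_iSup LinearMap.range φ

lemma map_traceSubmodule_le (f : N →ₗ[A] L) :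
    (traceSubmodule A Q N).map f ≤ traceSubmodule A Q L := by
  rw [traceSubmodule, Submodule.map_iSup]
  exact iSup_le fun φ => (LinearMap.range_comp φ f).ge.trans (range_le_traceSubmodule _)

lemma range_le_traceSubmodule_of_eq_top (hN : traceSubmodule A Q N = ⊤) (f : N →ₗ[A] L) :
    LinearMap.range f ≤ traceSubmodule A Q L := by
  rw [LinearMap.range_eq_map, ← hN]
  exact map_traceSubmodule_le f

lemma traceSubmodule_eq_top_of_surjective {φ : Q →ₗ[A] N} (hφ : Function.Surjective φ) :
    traceSubmodule A Q N = ⊤ :=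
  top_le_iff.1 ((LinearMap.range_eq_top.2 hφ).ge.trans (range_le_traceSubmodule φ))

lemma Fac.finite [Module.Finite A Q] (hN : Fac A Q N) : Module.Finite A N :=
  let ⟨_, _, p, hp⟩ := hN
  .of_surjective p hp

lemma Fac.of_surjective (hN : Fac A Q N) {f : N →ₗ[A] L} (hf : Function.Surjective f) :
    Fac A Q L :=
  let ⟨n, hn, p, hp⟩ := hN
  ⟨n, hn, f ∘ₗ p, hf.comp hp⟩

lemma Fac.traceSubmodule_eq_top (hN : Fac A Q N) : traceSubmodule A Q N = ⊤ := by
  obtain ⟨n, -, p, hp⟩ := hN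
  rw [← top_le_iff, ← LinearMap.range_eq_top.2 hp, LinearMap.range_eq_map,
    ← LinearMap.iSup_range_single, Submodule.map_iSup]
  exact iSup_le fun i => (LinearMap.range_comp _ p).ge.trans (range_le_traceSubmodule _)

lemma Fac.of_iSup_range_eq_top {ι : Type*} [Finite ι] [Nonempty ι] {φ : ι → Q →ₗ[A] N}
    (hφ : ⨆ i, LinearMap.range (φ i) = ⊤) : Fac A Q N := by
  let equiv := Finite.equivFin ι
  refine ⟨Nat.card ι, Nat.card_pos,
    LinearMap.lsum A (fun _ => Q) ℕ fun j => φ (equiv.symm j), ?_⟩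
  rw [← LinearMap.range_eq_top, ← top_le_iff, ← hφ]
  refine iSup_le fun i => ?_
  rintro _ ⟨x, rfl⟩
  exact ⟨Pi.single (equiv i) x, by rw [LinearMap.lsum_piSingle, Equiv.symm_apply_apply]⟩

lemma Fac.of_traceSubmodule_eq_top [Module.Finite A N] (hN : traceSubmodule A Q N = ⊤) :
    Fac A Q N := by
  classical
  obtain ⟨s, hs⟩ := CompleteLattice.IsCompactElement.exists_finset_of_le_iSup _
    ((Submodule.fg_iff_compact _).1 Module.Finite.fg_top)
    (fun φ : Q →ₗ[A] N => LinearMap.range φ) hN.ge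
  have : Nonempty ↥(insert 0 s) := ⟨0, Finset.mem_insert_self 0 s⟩
  refine Fac.of_iSup_range_eq_top (φ := fun φ : ↥(insert 0 s) => φ.1) (top_le_iff.1 ?_)
  exact hs.trans <| iSup₂_le fun φ hφ =>
    le_iSup_of_le ⟨φ, Finset.mem_insert_of_mem hφ⟩ le_rfl

end Trace

section Nakayama

/-- `Q` is a cogenerator: the maps to `Q` separate the points of every module.  The modules range
over the universe of `A` and `Q`. -/
def IsCogeneratorModule (A Q : Type u) [Ring A] [AddCommGroup Q] [Module A Q] : Prop :=
  ∀ (M : Type u) [AddCommGroup M] [Module A M] (x : M), x ≠ 0 → ∃ φ : M →ₗ[A] Q, φ x ≠ 0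

/-- `A` is a Nakayama ring, in the sense that every finitely generated indecomposable `A`-module
which is projective or injective is uniserial. -/
def IsNakayamaRing (A : Type u) [Ring A] : Prop :=
  ∀ (M : Type u) [AddCommGroup M] [Module A M], Module.Finite A M →
    IsIndecomposableModule A M → (Module.Projective A M ∨ Module.Injective A M) →
      IsUniserialModule A M

variable {A : Type u} [Ring A] {Q : Type u} [AddCommGroup Q] [Module A Q]

lemma IsUniserialModule.exists_injective_of_isCogeneratorModule {V : Type u}
    [AddCommGroup V] [Module A V] [IsArtinian A V] (hV : IsUniserialModule A V)
    (hQ : IsCogeneratorModule A Q) :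
    ∃ j : V →ₗ[A] Q, Function.Injective j := by
  rcases subsingleton_or_nontrivial V with _ | _
  · exact ⟨0, Function.injective_of_subsingleton _⟩
  -- A map that is nonzero on a simple submodule of a uniserial module is injective.
  obtain ⟨S, hS, -⟩ := (eq_bot_or_exists_atom_le (⊤ : Submodule A V)).resolve_left top_ne_bot
  obtain ⟨x, hxS, hx⟩ := Submodule.exists_mem_ne_zero_of_ne_bot hS.1
  obtain ⟨φ, hφ⟩ := hQ V x hx
  have hdisj : Disjoint S (LinearMap.ker φ) := hS.not_le_iff_disjoint.1 fun h => hφ (h hxS)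
  exact ⟨φ, LinearMap.ker_eq_bot.1 <|
    (hV.eq_bot_or_eq_bot_of_disjoint hdisj).resolve_left hS.1⟩

variable [Module.Finite A Q] [Module.Injective A Q]

lemma IsNakayamaRing.isUniserialModule_range (hA : IsNakayamaRing A) {e : Module.End A Q}
    (he : IsIdempotentElem e) (hind : IsIndecomposableModule A (LinearMap.range e)) :
    IsUniserialModule A (LinearMap.range e) :=
  hA _ inferInstance hind <|
    .inr (injective_of_split _ _ (rangeRestrict_comp_subtype_of_isIdempotentElem he))

variable [IsArtinianRing A] (hA : IsNakayamaRing A) (hQ : IsCogeneratorModule A Q)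
include hA hQ

lemma traceSubmodule_eq_top_of_surjective_injective {V I : Type u} [AddCommGroup V] [Module A V]
    [IsArtinian A V] (hV : IsUniserialModule A V) [AddCommGroup I] [Module A I] [Nontrivial I]
    [Module.Injective A I] {ψ : V →ₗ[A] I} (hψ : Function.Surjective ψ) :
    traceSubmodule A Q V = ⊤ := by
  have := hψ.nontrivial
  obtain ⟨j, hj⟩ := hV.exists_injective_of_isCogeneratorModule hQ
  obtain ⟨e, he, hind, hej⟩ := exists_isIdempotentElem_isIndecomposableModule_range
    (p := fun e : Module.End A Q => Function.Injective (e ∘ₗ j)) hj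
    (fun h => by
      obtain ⟨x, hx⟩ := exists_ne (0 : V)
      exact hx (h (by simp)))
    (fun c d h => hV.injective_or_injective_of_add (by rwa [← LinearMap.add_comp]))
  have hJ : IsUniserialModule A (LinearMap.range e) := hA.isUniserialModule_range he hind
  let j' : V →ₗ[A] LinearMap.range e := e.rangeRestrict ∘ₗ j
  have hj' : Function.Injective j' := Function.Injective.of_comp (f := Subtype.val) hej
  obtain ⟨ψ', hψ'⟩ := Module.Injective.out j' hj' ψ
  have hj'_surj : Function.Surjective j' :=
    hJ.surjective_of_surjective_comp (ψ := ψ') (by rwa [LinearMap.ext (f := ψ' ∘ₗ j') hψ'])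
  let equiv := LinearEquiv.ofBijective j' ⟨hj', hj'_surj⟩
  exact traceSubmodule_eq_top_of_surjective (φ := equiv.symm.toLinearMap ∘ₗ e.rangeRestrict)
    (equiv.symm.surjective.comp e.surjective_rangeRestrict)

lemma range_le_traceSubmodule_of_isUniserialModule {P I : Type u} {E : Type v}
    [AddCommGroup P] [Module A P] [IsArtinian A P] (hP : IsUniserialModule A P)
    [AddCommGroup I] [Module A I] [Nontrivial I] [Module.Injective A I]
    (hI : traceSubmodule A Q I = ⊤) {π : P →ₗ[A] I} (hπ : Function.Surjective π)
    [AddCommGroup E] [Module A E] (h : P →ₗ[A] E) :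
    LinearMap.range h ≤ traceSubmodule A Q E := by
  have range_le {K : Submodule A P} (hK : K ≤ LinearMap.ker h)
      (htop : traceSubmodule A Q (P ⧸ K) = ⊤) : LinearMap.range h ≤ traceSubmodule A Q E :=
    (K.range_liftQ h hK).ge.trans (range_le_traceSubmodule_of_eq_top htop _)
  rcases hP (LinearMap.ker π) (LinearMap.ker h) with hker | hker
  · refine range_le hker (top_le_iff.1 ?_)
    let equiv := π.quotKerEquivOfSurjective hπ
    exact equiv.symm.range.ge.trans (range_le_traceSubmodule_of_eq_top hI equiv.symm.toLinearMap)
  · have hψ : Function.Surjective ((LinearMap.ker h).liftQ π hker) := by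
      rwa [← LinearMap.range_eq_top, Submodule.range_liftQ, LinearMap.range_eq_top]
    exact range_le le_rfl <| traceSubmodule_eq_top_of_surjective_injective hA hQ
      (hP.of_surjective (LinearMap.ker h).mkQ_surjective) hψ

theorem traceSubmodule_quotient_traceSubmodule (E : Type v) [AddCommGroup E] [Module A E] :
    traceSubmodule A Q (E ⧸ traceSubmodule A Q E) = ⊥ := by
  refine iSup_eq_bot.2 fun φ => LinearMap.range_eq_bot.2 ?_
  by_contra hφ
  obtain ⟨e, he, hind, hφe⟩ := exists_isIdempotentElem_isIndecomposableModule_range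
    (p := fun e : Module.End A Q => φ ∘ₗ e ≠ 0) hφ (by simp) (fun c d h => by
      contrapose! h
      rw [LinearMap.comp_add, h.1, h.2, add_zero])
  have hI : IsUniserialModule A (LinearMap.range e) := hA.isUniserialModule_range he hind
  have := hind.1
  obtain ⟨P, _, _, π, _, hproj, hPind, hπ⟩ := hI.exists_projective_surjective
  obtain ⟨h, hh⟩ := Module.projective_lifting_property (traceSubmodule A Q E).mkQ
    (φ ∘ₗ (LinearMap.range e).subtype ∘ₗ π) (Submodule.mkQ_surjective _)
  have := injective_of_split _ _ (rangeRestrict_comp_subtype_of_isIdempotentElem he)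
  have hrange : LinearMap.range h ≤ traceSubmodule A Q E :=
    range_le_traceSubmodule_of_isUniserialModule hA hQ (hA P ‹_› hPind (.inl hproj))
      (traceSubmodule_eq_top_of_surjective e.surjective_rangeRestrict) hπ h
  refine hφe (LinearMap.ext fun x => ?_)
  obtain ⟨y, hy⟩ := hπ (e.rangeRestrict x)
  have hhy : (traceSubmodule A Q E).mkQ (h y) = 0 :=
    (Submodule.Quotient.mk_eq_zero _).2 (hrange ⟨y, rfl⟩)
  simpa [hy, hhy] using (LinearMap.congr_fun hh y).symm

end Nakayama

namespace kDual

variable {k A : Type u} [Field k] [Ring A] [Algebra k A]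

instance : IsScalarTower k A (kDual k A) :=
  ⟨fun c a f => by ext b; simp⟩

instance [FiniteDimensional k A] : Module.Finite A (kDual k A) :=
  .of_restrictScalars_finite k A _

instance : Module.Injective A (kDual k A) := by
  refine Module.Baer.injective fun I g => ?_
  obtain ⟨l, hl⟩ := LinearMap.exists_extend (p := I.restrictScalars k)
    (LinearMap.applyₗ (1 : A) ∘ₗ g.restrictScalars k)
  refine ⟨LinearMap.toSpanSingleton A _ l, fun a ha => LinearMap.ext fun b => ?_⟩
  calc l (b * a) = g (b • ⟨a, ha⟩) 1 := LinearMap.congr_fun hl (b • ⟨a, ha⟩)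
    _ = g ⟨a, ha⟩ b := by rw [map_smul, smul_apply, one_mul]

/-- The map `V → DA` corresponding to a functional on `V` under the adjunction
`Hom_A(V, DA) ≃ Hom_k(V, k)`. -/
def ofFunctional {V : Type*} [AddCommGroup V] [Module A V] [Module k V] [IsScalarTower k A V]
    (l : V →ₗ[k] k) : V →ₗ[A] kDual k A where
  toFun v := l ∘ₗ (LinearMap.toSpanSingleton A V v).restrictScalars k
  map_add' v w := by ext a; simp
  map_smul' a v := by ext b; simp [mul_smul]

variable (k A) in
lemma isCogeneratorModule : IsCogeneratorModule A (kDual k A) := by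
  intro M _ _ x hx
  let _ : Module k M := Module.compHom M (algebraMap k A)
  have : IsScalarTower k A M := .of_algebraMap_smul fun _ _ => rfl
  obtain ⟨l, hl⟩ := Module.Projective.exists_dual_ne_zero k hx
  exact ⟨ofFunctional l, fun h => hl (by simpa [ofFunctional] using LinearMap.congr_fun h 1)⟩

end kDual

theorem facDual_closed_under_extensions_of_nakayama_general
    {A : Type u} [Ring A] [IsArtinianRing A] (hA : IsNakayamaRing A)
    {Q : Type u} [AddCommGroup Q] [Module A Q] [Module.Finite A Q] [Module.Injective A Q]
    (hQ : IsCogeneratorModule A Q)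
    {X : Type v} [AddCommGroup X] [Module A X] {E : Type w} [AddCommGroup E] [Module A E]
    {Y : Type w'} [AddCommGroup Y] [Module A Y]
    {f : X →ₗ[A] E} {g : E →ₗ[A] Y} (hfg : Function.Exact f g) (hg : Function.Surjective g)
    (hX : Fac A Q X) (hY : Fac A Q Y) : Fac A Q E := by
  have := hX.finite
  have := hY.finite
  have := Module.Finite.of_exact hfg hg
  have hf : LinearMap.range f ≤ traceSubmodule A Q E :=
    range_le_traceSubmodule_of_eq_top hX.traceSubmodule_eq_top f
  have hquot : Fac A Q (E ⧸ traceSubmodule A Q E) :=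
    hY.of_surjective (f := Submodule.factor hf ∘ₗ (hfg.linearEquivOfSurjective hg).symm.toLinearMap)
      ((Submodule.factor_surjective hf).comp (LinearEquiv.surjective _))
  refine .of_traceSubmodule_eq_top (Submodule.Quotient.subsingleton_iff.1 ?_)
  exact (Submodule.subsingleton_iff A).1 <| subsingleton_of_bot_eq_top <|
    (traceSubmodule_quotient_traceSubmodule hA hQ E).symm.trans hquot.traceSubmodule_eq_top

/-- If `A` is a Nakayama algebra over `k` (equivalently: every finite-dimensional
indecomposable projective and every finite-dimensional indecomposable injective
`A`-module is uniserial), then `Fac DA` is closed under extensions: for any short exact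
sequence `0 → X → E → Y → 0` in `mod A` with `X, Y ∈ Fac DA`, also `E ∈ Fac DA`. -/
theorem facDual_closed_under_extensions_of_nakayama
    (k A : Type u) [Field k] [Ring A] [Algebra k A] [FiniteDimensional k A]
    (hNak : ∀ (M : Type u) [AddCommGroup M] [Module A M], Module.Finite A M →
      IsIndecomposableModule A M →
      (Module.Projective A M ∨ Module.Injective A M) →
      IsUniserialModule A M)
    (X E Y : Type u)
    [AddCommGroup X] [Module A X] [Module.Finite A X]
    [AddCommGroup E] [Module A E] [Module.Finite A E]
    [AddCommGroup Y] [Module A Y] [Module.Finite A Y]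
    (f : X →ₗ[A] E) (g : E →ₗ[A] Y)
    (hf : Function.Injective f) (hg : Function.Surjective g)
    (hfg : LinearMap.range f = LinearMap.ker g)
    (hX : FacDual k A X) (hY : FacDual k A Y) :
    FacDual k A E := by
  have := IsArtinianRing.of_finite k A
  exact facDual_closed_under_extensions_of_nakayama_general hNak (kDual.isCogeneratorModule k A)
    (LinearMap.exact_iff.2 hfg.symm) hg hX hY
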